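/- Soundness of FOLPb: For every constant specification CS and every formula φ, if ⊢_CS φ then φ is valid in every Fitting model for FOLPb meeting CS. -/

import Mathlib

/-- Justification terms of first-order justification logic (FOLPb / FOJT45). -/
inductive JTerm : Type
  | jvar : Nat → JTerm
  | jconst : Nat → JTerm
  | app : JTerm → JTerm → JTerm
  | plus : JTerm → JTerm → JTerm
  | bang : JTerm → JTerm
  | bb : JTerm → JTerm
  | gen : Nat → JTerm → JTerm
  | quest : JTerm → JTerm
  deriving DecidableEq

namespace JTerm

/-- Basic variables occurring as `gen` subscripts in a term. -/
def gvars : JTerm → Finset Nat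
  | jvar _ => ∅
  | jconst _ => ∅
  | app t s => t.gvars ∪ s.gvars
  | plus t s => t.gvars ∪ s.gvars
  | bang t => t.gvars
  | bb t => t.gvars
  | gen x t => insert x t.gvars
  | quest t => t.gvars

end JTerm

/-- Formulas of first-order justification logic.  Individual "variables" are either
basic variables (`Sum.inl n`, which may be quantified and appear as `gen` subscripts)
or extra constants from `V` (witness variables / domain members), which are never
quantified. -/
inductive Fml (V : Type) : Type
  | atom : Nat → List (Nat ⊕ V) → Fml V
  | bot : Fml V
  | imp : Fml V → Fml V → Fml V
  | all : Nat → Fml V → Fml V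
  | box : JTerm → Finset (Nat ⊕ V) → Fml V → Fml V

namespace Fml

variable {V : Type} [DecidableEq V]

def neg (φ : Fml V) : Fml V := φ.imp .bot
def orr (φ ψ : Fml V) : Fml V := φ.neg.imp ψ
def andd (φ ψ : Fml V) : Fml V := (φ.imp ψ.neg).neg
def ex (x : Nat) (φ : Fml V) : Fml V := (Fml.all x φ.neg).neg

/-- Free individual variables.  Following the paper, `fv (t :_X φ) = X`. -/
def fv : Fml V → Finset (Nat ⊕ V)
  | atom _ l => l.toFinset
  | bot => ∅
  | imp φ ψ => φ.fv ∪ ψ.fv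
  | all x φ => φ.fv \ {Sum.inl x}
  | box _ X _ => X

/-- Substitution of `e` for the free occurrences of the individual variable `x`. -/
def subst (x e : Nat ⊕ V) : Fml V → Fml V
  | atom P l => atom P (l.map fun v => if v = x then e else v)
  | bot => bot
  | imp φ ψ => imp (subst x e φ) (subst x e ψ)
  | all y φ => if x = Sum.inl y then all y φ else all y (subst x e φ)
  | box t X φ =>
      if x ∈ X then box t (X.image fun v => if v = x then e else v) (subst x e φ)
      else box t X φ

/-- `e` is free for `x` in the given formula. -/
def freeFor (e x : Nat ⊕ V) : Fml V → Prop
  | atom _ _ => True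
  | bot => True
  | imp φ ψ => freeFor e x φ ∧ freeFor e x ψ
  | all y φ => x ∉ (Fml.all y φ).fv ∨ (e ≠ Sum.inl y ∧ freeFor e x φ)
  | box _ X φ => freeFor e x φ ∧ (e ∈ φ.fv → e ∈ X)

/-- All individual variables occurring in a formula (free, bound, in subscripts,
or as `gen` subscripts of justification terms). -/
def allVars : Fml V → Finset (Nat ⊕ V)
  | atom _ l => l.toFinset
  | bot => ∅
  | imp φ ψ => φ.allVars ∪ ψ.allVars
  | all x φ => insert (Sum.inl x) φ.allVars
  | box t X φ => X ∪ t.gvars.image Sum.inl ∪ φ.allVars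

/-- The set of witness variables / domain constants (`Sum.inr`-variables) occurring
in a formula. -/
def wvars (φ : Fml V) : Finset (Nat ⊕ V) := φ.allVars.filter fun v => v.isRight

/-- Free basic variables. -/
def fbv (φ : Fml V) : Finset Nat :=
  φ.fv.biUnion fun v => match v with | Sum.inl n => {n} | Sum.inr _ => ∅

/-- Universal closure (over the free basic variables). -/
noncomputable def close (φ : Fml V) : Fml V := φ.fbv.toList.foldr Fml.all φ

/-- Renaming of the free individual variables of a formula. -/
def renameFree (ρ : (Nat ⊕ V) → (Nat ⊕ V)) : Fml V → Fml V
  | atom P l => atom P (l.map ρ)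
  | bot => bot
  | imp φ ψ => imp (renameFree ρ φ) (renameFree ρ ψ)
  | all y φ => all y (renameFree (Function.update ρ (Sum.inl y) (Sum.inl y)) φ)
  | box t X φ => box t (X.image ρ) (renameFree (fun v => if v ∈ X then ρ v else v) φ)

/-- Replacement of *every* occurrence of the individual variable `a` by `e`
(used for witness variables, which are never bound). -/
def replaceAll (a e : Nat ⊕ V) : Fml V → Fml V
  | atom P l => atom P (l.map fun v => if v = a then e else v)
  | bot => bot
  | imp φ ψ => imp (replaceAll a e φ) (replaceAll a e ψ)
  | all x φ => all x (replaceAll a e φ)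
  | box t X φ => box t (X.image fun v => if v = a then e else v) (replaceAll a e φ)

/-- Change the type of extra constants. -/
def vmap {V' : Type} [DecidableEq V'] (f : V → V') : Fml V → Fml V'
  | atom P l => atom P (l.map (Sum.map id f))
  | bot => bot
  | imp φ ψ => imp (vmap f φ) (vmap f ψ)
  | all x φ => all x (vmap f φ)
  | box t X φ => box t (X.image (Sum.map id f)) (vmap f φ)

def size : Fml V → Nat
  | atom _ _ => 1
  | bot => 1
  | imp φ ψ => φ.size + ψ.size + 1
  | all _ φ => φ.size + 1
  | box _ _ φ => φ.size + 1

/-- Simultaneous substitution of all free basic variables. -/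
def instAll (σ : Nat → Nat ⊕ V) : Fml V → Fml V
  | atom P l => atom P (l.map fun v => match v with | Sum.inl n => σ n | w => w)
  | bot => bot
  | imp φ ψ => imp (instAll σ φ) (instAll σ ψ)
  | all x φ => all x (instAll (Function.update σ x (Sum.inl x)) φ)
  | box t X φ =>
      box t (X.image fun v => match v with | Sum.inl n => σ n | w => w)
        (instAll (fun n => if Sum.inl n ∈ X then σ n else Sum.inl n) φ)

theorem size_subst (x e : Nat ⊕ V) : ∀ φ : Fml V, (φ.subst x e).size = φ.size := by
  intro φ
  induction φ with
  | atom P l => simp [subst, size]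
  | bot => simp [subst, size]
  | imp φ ψ ihφ ihψ => simp [subst, size, ihφ, ihψ]
  | all y φ ih => by_cases h : x = Sum.inl y <;> simp [subst, size, h, ih]
  | box t X φ ih => by_cases h : x ∈ X <;> simp [subst, size, h, ih]

theorem size_instAll : ∀ (φ : Fml V) (σ : Nat → Nat ⊕ V), (φ.instAll σ).size = φ.size := by
  intro φ
  induction φ with
  | atom P l => intro σ; simp [instAll, size]
  | bot => intro σ; simp [instAll, size]
  | imp φ ψ ihφ ihψ => intro σ; simp [instAll, size, ihφ, ihψ]
  | all y φ ih => intro σ; simp [instAll, size, ih]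
  | box t X φ ih => intro σ; simp [instAll, size, ih]

end Fml

/-- The two logics considered in the paper. -/
inductive Logic : Type
  | folpb
  | fojt45

/-- Axioms of the systems: **A1** (a standard Hilbert axiomatization of classical
first-order logic), **A2**, **A3**, **B1**–**B5**, together with the Barcan axiom
**Bb** (for FOLPb only) and negative introspection **B6** (for FOJT45 only). -/
inductive IsAxiom {V : Type} [DecidableEq V] : Logic → Fml V → Prop
  | a1k (L) (φ ψ : Fml V) : IsAxiom L (φ.imp (ψ.imp φ))
  | a1s (L) (φ ψ χ : Fml V) :
      IsAxiom L ((φ.imp (ψ.imp χ)).imp ((φ.imp ψ).imp (φ.imp χ)))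
  | a1dne (L) (φ : Fml V) : IsAxiom L (φ.neg.neg.imp φ)
  | a1inst (L) (x : Nat) (e : Nat ⊕ V) (φ : Fml V) (h : φ.freeFor e (Sum.inl x)) :
      IsAxiom L ((Fml.all x φ).imp (φ.subst (Sum.inl x) e))
  | a1allImp (L) (x : Nat) (φ ψ : Fml V) :
      IsAxiom L ((Fml.all x (φ.imp ψ)).imp ((Fml.all x φ).imp (Fml.all x ψ)))
  | a1vac (L) (x : Nat) (φ : Fml V) (h : Sum.inl x ∉ φ.fv) :
      IsAxiom L (φ.imp (Fml.all x φ))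
  | a2 (L) (t : JTerm) (X : Finset (Nat ⊕ V)) (y : Nat ⊕ V) (φ : Fml V)
      (h : y ∉ φ.fv) :
      IsAxiom L ((Fml.box t (insert y X) φ).imp (Fml.box t X φ))
  | a3 (L) (t : JTerm) (X : Finset (Nat ⊕ V)) (y : Nat ⊕ V) (φ : Fml V) :
      IsAxiom L ((Fml.box t X φ).imp (Fml.box t (insert y X) φ))
  | b1 (L) (t : JTerm) (X : Finset (Nat ⊕ V)) (φ : Fml V) :
      IsAxiom L ((Fml.box t X φ).imp φ)
  | b2 (L) (t s : JTerm) (X : Finset (Nat ⊕ V)) (φ ψ : Fml V) :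
      IsAxiom L ((Fml.box t X (φ.imp ψ)).imp
        ((Fml.box s X φ).imp (Fml.box (t.app s) X ψ)))
  | b3l (L) (t s : JTerm) (X : Finset (Nat ⊕ V)) (φ : Fml V) :
      IsAxiom L ((Fml.box t X φ).imp (Fml.box (t.plus s) X φ))
  | b3r (L) (t s : JTerm) (X : Finset (Nat ⊕ V)) (φ : Fml V) :
      IsAxiom L ((Fml.box s X φ).imp (Fml.box (t.plus s) X φ))
  | b4 (L) (t : JTerm) (X : Finset (Nat ⊕ V)) (φ : Fml V) :
      IsAxiom L ((Fml.box t X φ).imp (Fml.box t.bang X (Fml.box t X φ)))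
  | b5 (L) (t : JTerm) (X : Finset (Nat ⊕ V)) (x : Nat) (φ : Fml V)
      (h : Sum.inl x ∉ X) :
      IsAxiom L ((Fml.box t X φ).imp (Fml.box (t.gen x) X (Fml.all x φ)))
  | bb (t : JTerm) (X : Finset (Nat ⊕ V)) (y : Nat) (φ : Fml V)
      (h : Sum.inl y ∉ X) :
      IsAxiom Logic.folpb
        ((Fml.all y (Fml.box t (insert (Sum.inl y) X) φ)).imp
          (Fml.box t.bb X (Fml.all y φ)))
  | b6 (t : JTerm) (X : Finset (Nat ⊕ V)) (φ : Fml V) :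
      IsAxiom Logic.fojt45
        ((Fml.box t X φ).neg.imp (Fml.box t.quest X (Fml.box t X φ).neg))

/-- Derivability from a set `Γ` of assumptions, with extra axioms from the constant
specification `CS`; generalization is only applied to variables not free in `Γ`. -/
inductive Deriv {V : Type} [DecidableEq V] (L : Logic) (CS : Set (Fml V))
    (Γ : Set (Fml V)) : Fml V → Prop
  | ax {φ : Fml V} : IsAxiom L φ → Deriv L CS Γ φ
  | cs {φ : Fml V} : φ ∈ CS → Deriv L CS Γ φ
  | hyp {φ : Fml V} : φ ∈ Γ → Deriv L CS Γ φ
  | mp {φ ψ : Fml V} : Deriv L CS Γ (φ.imp ψ) → Deriv L CS Γ φ → Deriv L CS Γ ψ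
  | genR {φ : Fml V} {x : Nat} : Deriv L CS Γ φ →
      (∀ ψ ∈ Γ, Sum.inl x ∉ ψ.fv) → Deriv L CS Γ (Fml.all x φ)

/-- `CS` is a constant specification: each member has the form `c : ψ` with `ψ` an axiom. -/
def IsCS {V : Type} [DecidableEq V] (L : Logic) (CS : Set (Fml V)) : Prop :=
  ∀ χ ∈ CS, ∃ (c : Nat) (φ : Fml V),
    χ = Fml.box (JTerm.jconst c) ∅ φ ∧ IsAxiom L φ

/-- `CS` is axiomatically appropriate. -/
def AxAppropriate {V : Type} [DecidableEq V] (L : Logic) (CS : Set (Fml V)) : Prop :=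
  ∀ φ : Fml V, IsAxiom L φ → ∃ c : Nat, Fml.box (JTerm.jconst c) ∅ φ ∈ CS

def Consistent {V : Type} [DecidableEq V] (L : Logic) (CS Γ : Set (Fml V)) : Prop :=
  ¬ Deriv L CS Γ Fml.bot

def MaxConsistent {V : Type} [DecidableEq V] (L : Logic) (CS Γ : Set (Fml V)) : Prop :=
  Consistent L CS Γ ∧ ∀ Δ : Set (Fml V), Γ ⊆ Δ → Consistent L CS Δ → Δ = Γ

/-- Formulas of the basic language (no witness variables). -/
abbrev FmlB := Fml Empty

/-- Henkin formulas: formulas possibly containing witness variables (`Sum.inr`). -/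
abbrev FmlW := Fml Nat

/-- A basic-language formula regarded as a Henkin formula. -/
def liftB : FmlB → FmlW := Fml.vmap fun e => e.elim

/-- A Henkin formula containing no witness variables. -/
def NoWitness (φ : FmlW) : Prop := ∀ v ∈ φ.allVars, v.isLeft = true

/-- Two formulas are variable variants: one is obtained from the other by a
bijective renaming of free individual variables. -/
def VarVariant {V : Type} [DecidableEq V] (φ ψ : Fml V) : Prop :=
  ∃ ρ : (Nat ⊕ V) → (Nat ⊕ V), Function.Bijective ρ ∧ ψ = Fml.renameFree ρ φ

/-- A constant specification is variant closed. -/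
def VariantClosed {V : Type} [DecidableEq V] (CS : Set (Fml V)) : Prop :=
  ∀ (φ ψ : Fml V) (c : Nat), VarVariant φ ψ →
    (Fml.box (JTerm.jconst c) ∅ φ ∈ CS ↔ Fml.box (JTerm.jconst c) ∅ ψ ∈ CS)

/-- The extension `CS(V)` of a basic constant specification to the language with
witness variables: justified axioms with some free basic variables replaced by
distinct witness variables. -/
def CSV (CS : Set FmlB) : Set FmlW :=
  {χ | ∃ (c : Nat) (φ : FmlB) (ρ : (Nat ⊕ Nat) → (Nat ⊕ Nat)),
    Fml.box (JTerm.jconst c) ∅ φ ∈ CS ∧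
    Function.Injective ρ ∧
    (∀ m : Nat, ρ (Sum.inr m) = Sum.inr m) ∧
    (∀ n : Nat, ρ (Sum.inl n) = Sum.inl n ∨ ∃ m : Nat, ρ (Sum.inl n) = Sum.inr m) ∧
    χ = Fml.box (JTerm.jconst c) ∅ (Fml.renameFree ρ (liftB φ))}

/-- `Γ^#`. -/
def sharp (Γ : Set FmlW) : Set FmlW :=
  {χ | ∃ (t : JTerm) (X : Finset (Nat ⊕ Nat)) (φ : FmlW),
    Fml.box t X φ ∈ Γ ∧ (Fml.box t X φ : FmlW).fbv = ∅ ∧ X = φ.wvars ∧ χ = φ.close}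

/-! ### Templates -/

inductive Tmpl : Type
  | pvar : Nat → Tmpl
  | neg : Tmpl → Tmpl
  | orr : Tmpl → Tmpl → Tmpl
  | andd : Tmpl → Tmpl → Tmpl
  | box : Tmpl → Tmpl

namespace Tmpl

def letters : Tmpl → Multiset Nat
  | pvar i => {i}
  | neg G => G.letters
  | orr G H => G.letters + H.letters
  | andd G H => G.letters + H.letters
  | box G => G.letters

/-- No propositional letter occurs more than once. -/
def IsTemplate (F : Tmpl) : Prop := F.letters.Nodup

def Positive : Tmpl → Prop
  | pvar _ => True
  | neg _ => False
  | orr G H => G.Positive ∧ H.Positive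
  | andd G H => G.Positive ∧ H.Positive
  | box G => G.Positive

def Disjunctive : Tmpl → Prop
  | pvar _ => True
  | neg _ => False
  | orr G H => G.Disjunctive ∧ H.Disjunctive
  | andd _ _ => False
  | box G => G.Disjunctive

end Tmpl

/-- The instantiation set `⟦F(φ⃗)⟧`, where the valuation `v` gives the Henkin formula
substituted for each propositional letter. -/
inductive Inst (v : Nat → FmlW) : Tmpl → FmlW → Prop
  | pvar (i : Nat) : Inst v (Tmpl.pvar i) (v i)
  | neg {G : Tmpl} {ψ : FmlW} : Inst v G ψ → Inst v (Tmpl.neg G) ψ.neg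
  | orr {G H : Tmpl} {ψ θ : FmlW} :
      Inst v G ψ → Inst v H θ → Inst v (Tmpl.orr G H) (ψ.orr θ)
  | andd {G H : Tmpl} {ψ θ : FmlW} :
      Inst v G ψ → Inst v H θ → Inst v (Tmpl.andd G H) (ψ.andd θ)
  | box {G : Tmpl} {ψ : FmlW} (t : JTerm) :
      Inst v G ψ → Inst v (Tmpl.box G) (Fml.box t ψ.wvars ψ)

/-- The set of negations of members of `⟦F(φ⃗)⟧`. -/
def NegInst (v : Nat → FmlW) (F : Tmpl) : Set FmlW :=
  {χ | ∃ ψ : FmlW, Inst v F ψ ∧ χ = ψ.neg}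

/-- `Δ` admits instantiation (relative to the basic constant specification `CS`). -/
def AdmitsInst (CS : Set FmlB) (Δ : Set FmlW) : Prop :=
  ∀ F : Tmpl, F.IsTemplate → F.Disjunctive →
    ∀ (v : Nat → FmlW) (q x : Nat) (φ : FmlW),
      Consistent Logic.folpb (CSV CS)
        (Δ ∪ NegInst (Function.update v q (Fml.all x φ)) F) →
      ∃ a : Nat,
        Consistent Logic.folpb (CSV CS)
          (Δ ∪ NegInst (Function.update v q (φ.subst (Sum.inl x) (Sum.inr a))) F)

/-! ### Fitting models -/

/-- A Fitting model for FOLPb with constant domain `D`. -/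
structure FModel (D : Type) [DecidableEq D] where
  W : Type
  nonempty : Nonempty W
  R : W → W → Prop
  refl : ∀ w, R w w
  trans : ∀ {u v w}, R u v → R v w → R u w
  I : Nat → W → List D → Prop
  E : JTerm → Fml D → Set W
  condApp : ∀ (t s : JTerm) (φ ψ : Fml D), E t (φ.imp ψ) ∩ E s φ ⊆ E (t.app s) ψ
  condPlus : ∀ (t s : JTerm) (φ : Fml D), E t φ ∪ E s φ ⊆ E (t.plus s) φ
  condBang : ∀ (t : JTerm) (φ : Fml D) (X : Finset (Nat ⊕ D)),
    (∀ x ∈ X, x.isRight = true) → φ.wvars ⊆ X →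
    E t φ ⊆ E t.bang (Fml.box t X φ)
  condClosure : ∀ (t : JTerm) (φ : Fml D) {w w'},
    w ∈ E t φ → R w w' → w' ∈ E t φ
  condInst : ∀ (t : JTerm) (φ : Fml D) (x : Nat) (a : D) {w},
    w ∈ E t φ → w ∈ E t (φ.subst (Sum.inl x) (Sum.inr a))
  condGen : ∀ (t : JTerm) (φ : Fml D) (x : Nat), E t φ ⊆ E (t.gen x) (Fml.all x φ)
  condB : ∀ (t : JTerm) (φ : Fml D) (y : Nat) {w},
    (∀ a : D, w ∈ E t (φ.subst (Sum.inl y) (Sum.inr a))) →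
    w ∈ E t.bb (Fml.all y φ)

/-- Truth of a (closed) `D`-formula at a world. -/
def Truth {D : Type} [DecidableEq D] (M : FModel D) : M.W → Fml D → Prop
  | w, .atom P l => ∃ ds : List D, l = ds.map Sum.inr ∧ M.I P w ds
  | _, .bot => False
  | w, .imp φ ψ => Truth M w φ → Truth M w ψ
  | w, .all x φ => ∀ a : D, Truth M w (φ.subst (Sum.inl x) (Sum.inr a))
  | w, .box t _ φ => w ∈ M.E t φ ∧
      ∀ w', M.R w w' → ∀ σ : Nat → Nat ⊕ D, (∀ n, ∃ a : D, σ n = Sum.inr a) →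
        Truth M w' (φ.instAll σ)
  termination_by _ φ => φ.size
  decreasing_by
    all_goals simp [Fml.size, Fml.size_subst, Fml.size_instAll]
    all_goals omega

/-- A basic-language formula as a `D`-formula. -/
def toD {D : Type} [DecidableEq D] : FmlB → Fml D := Fml.vmap fun e => e.elim

/-- Validity in a model: the universal closure is true at every world. -/
def Valid {D : Type} [DecidableEq D] (M : FModel D) (φ : FmlB) : Prop :=
  ∀ w : M.W, Truth M w (toD φ.close)

/-- The model meets the constant specification `CS`. -/
def Meets {D : Type} [DecidableEq D] (M : FModel D) (CS : Set FmlB) : Prop :=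
  ∀ (c : Nat) (φ : FmlB), Fml.box (JTerm.jconst c) ∅ φ ∈ CS →
    ∀ w : M.W, w ∈ M.E (JTerm.jconst c) (toD φ)

/-! ### Auxiliary material for the soundness proof -/

namespace SoundAux

variable {D : Type} [DecidableEq D]

/-- Evaluate a basic variable. -/
def ev (σ : Nat → Nat ⊕ D) : Nat ⊕ Empty → Nat ⊕ D
  | Sum.inl n => σ n
  | Sum.inr e => e.elim

/-- Restriction of an assignment to `X`. -/
def res (X : Finset (Nat ⊕ Empty)) (σ : Nat → Nat ⊕ D) : Nat → Nat ⊕ D :=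
  fun n => if Sum.inl n ∈ X then σ n else Sum.inl n

/-- Translation of a basic formula to a `D`-formula, instantiating by `σ`. -/
def J (σ : Nat → Nat ⊕ D) : FmlB → Fml D
  | .atom P l => .atom P (l.map (ev σ))
  | .bot => .bot
  | .imp φ ψ => .imp (J σ φ) (J σ ψ)
  | .all x φ => .all x (J (Function.update σ x (Sum.inl x)) φ)
  | .box t X φ => .box t (X.image (ev σ)) (J (res X σ) φ)

theorem toD_eq (φ : FmlB) : (toD φ : Fml D) = J Sum.inl φ := by
  have hev : (Sum.map id (fun e : Empty => e.elim) : Nat ⊕ Empty → Nat ⊕ D) = ev Sum.inl := by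
    funext v
    rcases v with n | e
    · rfl
    · exact e.elim
  induction φ with
  | atom P l => simp only [toD, Fml.vmap, J, hev]
  | bot => rfl
  | imp φ ψ h1 h2 => simp only [toD, Fml.vmap, J] at *; rw [h1, h2]
  | all x φ ih => simp only [toD, Fml.vmap, J] at *; rw [ih, Function.update_eq_self]
  | box t X φ ih =>
    simp only [toD, Fml.vmap, J, hev] at *
    have : (res X Sum.inl : Nat → Nat ⊕ D) = Sum.inl := by
      funext n; simp [res]
    rw [ih, this]

/-- Each variable is sent to itself or to a domain element. -/
def Good (σ : Nat → Nat ⊕ D) : Prop := ∀ n m, σ n = Sum.inl m → m = n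

/-- Each variable is sent to a domain element. -/
def Closed (σ : Nat → Nat ⊕ D) : Prop := ∀ n, ∃ a : D, σ n = Sum.inr a

theorem Closed.good {σ : Nat → Nat ⊕ D} (h : Closed σ) : Good σ := by
  intro n m e
  obtain ⟨a, ha⟩ := h n
  simp [ha] at e

theorem Good.update {σ : Nat → Nat ⊕ D} (h : Good σ) (x : Nat) :
    Good (Function.update σ x (Sum.inl x)) := by
  intro n m e
  by_cases hn : n = x
  · subst hn; simp at e; exact e.symm
  · simp [hn] at e; exact h _ _ e

theorem Good.res {σ : Nat → Nat ⊕ D} (h : Good σ) (X : Finset (Nat ⊕ Empty)) :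
    Good (res X σ) := by
  intro n m e
  by_cases hn : Sum.inl n ∈ X
  · simp [SoundAux.res, hn] at e; exact h _ _ e
  · simp [SoundAux.res, hn] at e; exact e.symm

theorem Closed.update {σ : Nat → Nat ⊕ D} (h : Closed σ) (x : Nat) (a : D) :
    Closed (Function.update σ x (Sum.inr a)) := by
  intro n
  by_cases hn : n = x
  · subst hn; exact ⟨a, by simp⟩
  · simpa [hn] using h n

theorem ev_congr {σ τ : Nat → Nat ⊕ D} {v : Nat ⊕ Empty}
    (h : ∀ n, v = Sum.inl n → σ n = τ n) : ev σ v = ev τ v := by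
  rcases v with n | e
  · exact h n rfl
  · exact e.elim

/-- `J` depends only on the values at free variables. -/
theorem J_congr (φ : FmlB) : ∀ {σ τ : Nat → Nat ⊕ D},
    (∀ n, Sum.inl n ∈ φ.fv → σ n = τ n) → J σ φ = J τ φ := by
  induction φ with
  | atom P l =>
    intro σ τ h
    simp only [J, Fml.atom.injEq, true_and]
    apply List.map_congr_left
    intro v hv
    apply ev_congr
    rintro n rfl
    exact h n (by simpa [Fml.fv] using hv)
  | bot => intros; rfl
  | imp φ ψ h1 h2 =>
    intro σ τ h
    simp only [J]
    rw [h1 fun n hn => h n (by simp [Fml.fv, hn]), h2 fun n hn => h n (by simp [Fml.fv, hn])]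
  | all x φ ih =>
    intro σ τ h
    simp only [J]
    rw [ih]
    intro n hn
    by_cases hx : n = x
    · subst hx; simp
    · simp only [Function.update_of_ne hx]
      exact h n (by simp [Fml.fv, hn, hx])
  | box t X φ ih =>
    intro σ τ h
    simp only [J]
    have h1 : X.image (ev σ) = X.image (ev τ) := by
      apply Finset.image_congr
      intro v hv
      apply ev_congr
      rintro n rfl
      exact h n (by simpa [Fml.fv] using hv)
    have h2 : res X σ = res X τ := by
      funext n
      by_cases hn : Sum.inl n ∈ X
      · simp [res, hn, h n (by simpa [Fml.fv] using hn)]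
      · simp [res, hn]
    rw [h1, h2]

theorem subst_of_notMem {V : Type} [DecidableEq V] (x e : Nat ⊕ V) (φ : Fml V) :
    x ∉ φ.fv → φ.subst x e = φ := by
  induction φ with
  | atom P l =>
    intro h
    simp only [Fml.fv, List.mem_toFinset] at h
    simp only [Fml.subst, Fml.atom.injEq, true_and]
    conv_rhs => rw [← List.map_id l]
    apply List.map_congr_left
    intro v hv
    have : v ≠ x := by rintro rfl; exact h hv
    simp [this]
  | bot => intros; rfl
  | imp φ ψ h1 h2 =>
    intro h
    simp only [Fml.fv, Finset.mem_union, not_or] at h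
    simp only [Fml.subst, h1 h.1, h2 h.2]
  | all y φ ih =>
    intro h
    by_cases hx : x = Sum.inl y
    · simp [Fml.subst, hx]
    · simp only [Fml.fv, Finset.mem_sdiff, Finset.mem_singleton, hx, not_false_eq_true,
        and_true] at h
      simp [Fml.subst, hx, ih h]
  | box t X φ ih =>
    intro h
    simp only [Fml.fv] at h
    simp [Fml.subst, h]

/-- Substitution of a free-for variable. -/
theorem J_subst (x y : Nat) (φ : FmlB) : ∀ {σ : Nat → Nat ⊕ D},
    φ.freeFor (Sum.inl y) (Sum.inl x) →
    J σ (φ.subst (Sum.inl x) (Sum.inl y)) = J (Function.update σ x (σ y)) φ := by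
  have hev : ∀ (σ : Nat → Nat ⊕ D) (v : Nat ⊕ Empty),
      ev σ (if v = Sum.inl x then Sum.inl y else v) = ev (Function.update σ x (σ y)) v := by
    intro σ v
    rcases v with n | e
    · by_cases hn : n = x
      · subst hn; simp [ev]
      · simp [ev, hn]
    · exact e.elim
  induction φ with
  | atom P l =>
    intro σ _
    simp only [Fml.subst, J, List.map_map, Fml.atom.injEq, true_and]
    apply List.map_congr_left
    intro v _
    exact hev σ v
  | bot => intros; rfl
  | imp φ ψ h1 h2 =>
    intro σ h
    simp only [Fml.subst, J]
    rw [h1 h.1, h2 h.2]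
  | all z φ ih =>
    intro σ h
    by_cases hfv : Sum.inl x ∈ (Fml.all z φ).fv
    · rcases h with h | ⟨h1, h2⟩
      · exact absurd hfv h
      · have hxz : x ≠ z := by
          rintro rfl; simp [Fml.fv] at hfv
        have hyz : y ≠ z := by
          rintro rfl; exact h1 rfl
        have : (Sum.inl x : Nat ⊕ Empty) ≠ Sum.inl z := by simpa using hxz
        simp only [Fml.subst, this, if_false, J]
        rw [ih h2, Function.update_of_ne hyz, Function.update_comm hxz]
    · rw [subst_of_notMem _ _ _ hfv]
      apply J_congr
      intro n hn
      have : n ≠ x := by rintro rfl; exact hfv hn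
      simp [this]
  | box t X φ ih =>
    intro σ h
    by_cases hx : Sum.inl x ∈ X
    · simp only [Fml.subst, hx, if_true, J]
      rw [ih h.1, Finset.image_image]
      congr 1
      · apply Finset.image_congr
        intro v _
        exact hev σ v
      · have hy : (Sum.inl y : Nat ⊕ Empty) ∈
            X.image (fun v => if v = Sum.inl x then Sum.inl y else v) :=
          Finset.mem_image.2 ⟨Sum.inl x, hx, by simp⟩
        apply J_congr
        intro n hn
        by_cases hnx : n = x
        · subst hnx; simp only [Function.update_self, res, hx, hy, if_true]
        · rw [Function.update_of_ne hnx]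
          by_cases hny : n = y
          · subst hny
            have hnX := h.2 hn
            simp only [res, hy, hnX, if_true, Function.update_of_ne hnx]
          · have : (Sum.inl n : Nat ⊕ Empty) ∈
                X.image (fun v => if v = Sum.inl x then Sum.inl y else v) ↔
                Sum.inl n ∈ X := by
              rw [Finset.mem_image]
              constructor
              · rintro ⟨v, hv, e⟩
                by_cases hvx : v = Sum.inl x
                · simp only [hvx, if_true, Sum.inl.injEq] at e
                  exact absurd e.symm hny
                · simp only [hvx, if_false] at e
                  exact e ▸ hv
              · intro hv
                exact ⟨_, hv, by simp [hnx]⟩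
            simp only [res, this, Function.update_of_ne hnx]
    · have : Sum.inl x ∉ (Fml.box t X φ).fv := hx
      rw [subst_of_notMem _ _ _ this]
      apply J_congr
      intro n hn
      have : n ≠ x := by rintro rfl; exact hx hn
      simp [this]

theorem mem_image_ev {X : Finset (Nat ⊕ Empty)} {σ : Nat → Nat ⊕ D} {v : Nat ⊕ D} :
    v ∈ X.image (ev σ) ↔ ∃ n, Sum.inl n ∈ X ∧ σ n = v := by
  rw [Finset.mem_image]
  constructor
  · rintro ⟨u, hu, e⟩
    rcases u with n | e'
    · exact ⟨n, hu, e⟩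
    · exact e'.elim
  · rintro ⟨n, hn, e⟩
    exact ⟨_, hn, e⟩

theorem mem_image_ev_inl {X : Finset (Nat ⊕ Empty)} {σ : Nat → Nat ⊕ D} (hσ : Good σ)
    {x : Nat} : Sum.inl x ∈ X.image (ev σ) ↔ Sum.inl x ∈ X ∧ σ x = Sum.inl x := by
  rw [mem_image_ev]
  constructor
  · rintro ⟨n, hn, e⟩
    have := hσ _ _ e
    subst this
    exact ⟨hn, e⟩
  · intro h
    exact ⟨x, h⟩

/-- Composition of an assignment with a further instantiation. -/
def comp (σ τ : Nat → Nat ⊕ D) : Nat → Nat ⊕ D :=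
  fun n => match σ n with
    | Sum.inl m => τ m
    | Sum.inr a => Sum.inr a

theorem J_instAll (φ : FmlB) : ∀ {σ τ : Nat → Nat ⊕ D}, Good σ →
    (J σ φ).instAll τ = J (comp σ τ) φ := by
  have hev : ∀ (σ τ : Nat → Nat ⊕ D) (v : Nat ⊕ Empty),
      (match ev σ v with | Sum.inl n => τ n | w => w) = ev (comp σ τ) v := by
    intro σ τ v
    rcases v with n | e
    · simp only [ev, comp]
      cases σ n <;> rfl
    · exact e.elim
  induction φ with
  | atom P l =>
    intro σ τ _
    simp only [Fml.instAll, J, List.map_map, Fml.atom.injEq, true_and]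
    apply List.map_congr_left
    intro v _
    exact hev σ τ v
  | bot => intros; rfl
  | imp φ ψ h1 h2 =>
    intro σ τ h
    simp only [Fml.instAll, J]
    rw [h1 h, h2 h]
  | all z φ ih =>
    intro σ τ h
    simp only [Fml.instAll, J]
    rw [ih (h.update z)]
    congr 2
    funext n
    by_cases hn : n = z
    · subst hn; simp [comp]
    · simp only [comp, Function.update_of_ne hn]
      cases e : σ n with
      | inl m =>
        have := h _ _ e
        subst this
        simp [hn]
      | inr a => rfl
  | box t X φ ih =>
    intro σ τ h
    simp only [Fml.instAll, J]
    rw [ih (h.res X), Finset.image_image]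
    congr 1
    · apply Finset.image_congr
      intro v _
      exact hev σ τ v
    · congr 1
      funext n
      by_cases hn : Sum.inl n ∈ X
      · simp only [comp, res, hn, if_true]
        cases e : σ n with
        | inl m =>
          have := h _ _ e
          subst this
          have : (Sum.inl m : Nat ⊕ D) ∈ X.image (ev σ) := (mem_image_ev_inl h).2 ⟨hn, e⟩
          simp only [this, if_true]
        | inr a => rfl
      · have : (Sum.inl n : Nat ⊕ D) ∉ X.image (ev σ) := fun h' =>
          hn ((mem_image_ev_inl h).1 h').1
        simp only [comp, res, hn, this, if_false]

/-- Substituting a single domain element. -/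
theorem J_substD (x : Nat) (a : D) (φ : FmlB) : ∀ {σ : Nat → Nat ⊕ D}, Good σ →
    (J σ φ).subst (Sum.inl x) (Sum.inr a) =
      J (fun n => if σ n = Sum.inl x then Sum.inr a else σ n) φ := by
  have hev : ∀ (σ : Nat → Nat ⊕ D) (v : Nat ⊕ Empty),
      (if ev σ v = Sum.inl x then Sum.inr a else ev σ v) =
        ev (fun n => if σ n = Sum.inl x then Sum.inr a else σ n) v := by
    intro σ v
    rcases v with n | e
    · rfl
    · exact e.elim
  induction φ with
  | atom P l =>
    intro σ _
    simp only [Fml.subst, J, List.map_map, Fml.atom.injEq, true_and]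
    apply List.map_congr_left
    intro v _
    exact hev σ v
  | bot => intros; rfl
  | imp φ ψ h1 h2 =>
    intro σ h
    simp only [Fml.subst, J]
    rw [h1 h, h2 h]
  | all z φ ih =>
    intro σ h
    simp only [Fml.subst, J]
    by_cases hx : x = z
    · subst hx
      simp only [if_true]
      congr 2
      funext n
      by_cases hn : n = x
      · subst hn; simp
      · simp only [Function.update_of_ne hn]
        have : σ n ≠ Sum.inl x := fun e => hn (h _ _ e).symm
        simp [this]
    · have h1 : (Sum.inl x : Nat ⊕ D) ≠ Sum.inl z := by simpa using hx
      simp only [h1, if_false]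
      rw [ih (h.update z)]
      congr 2
      funext n
      by_cases hn : n = z
      · subst hn; simp [Ne.symm hx]
      · simp only [Function.update_of_ne hn]
  | box t X φ ih =>
    intro σ h
    simp only [Fml.subst, J]
    by_cases hx : (Sum.inl x : Nat ⊕ D) ∈ X.image (ev σ)
    · have hx' := (mem_image_ev_inl h).1 hx
      simp only [hx, if_true]
      rw [ih (h.res X), Finset.image_image]
      congr 1
      · apply Finset.image_congr
        intro v _
        exact hev σ v
      · congr 1
        funext n
        by_cases hn : Sum.inl n ∈ X
        · simp only [res, hn, if_true]
        · have : n ≠ x := by rintro rfl; exact hn hx'.1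
          simp [res, hn, this]
    · simp only [hx, if_false]
      have key : ∀ n, Sum.inl n ∈ X → σ n ≠ Sum.inl x := fun n hn e =>
        hx (mem_image_ev.2 ⟨n, hn, e⟩)
      congr 1
      · apply Finset.image_congr
        intro v hv
        apply ev_congr
        rintro n rfl
        simp [key n hv]
      · congr 1
        funext n
        by_cases hn : Sum.inl n ∈ X
        · simp [res, hn, key n hn]
        · simp [res, hn]

theorem allVars_J (φ : FmlB) : ∀ {σ : Nat → Nat ⊕ D} {a : D},
    Sum.inr a ∈ (J σ φ).allVars → ∃ n, σ n = Sum.inr a := by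
  induction φ with
  | atom P l =>
    intro σ a h
    simp only [J, Fml.allVars, List.mem_toFinset, List.mem_map] at h
    obtain ⟨v, _, hv⟩ := h
    rcases v with n | e
    · exact ⟨n, hv⟩
    · exact e.elim
  | bot => intro σ a h; simp [J, Fml.allVars] at h
  | imp φ ψ h1 h2 =>
    intro σ a h
    simp only [J, Fml.allVars, Finset.mem_union] at h
    exact h.elim h1 h2
  | all z φ ih =>
    intro σ a h
    simp only [J, Fml.allVars, Finset.mem_insert, reduceCtorEq, false_or] at h
    obtain ⟨n, hn⟩ := ih h
    by_cases hz : n = z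
    · subst hz; simp at hn
    · exact ⟨n, by simpa [hz] using hn⟩
  | box t X φ ih =>
    intro σ a h
    simp only [J, Fml.allVars, Finset.mem_union] at h
    rcases h with (h | h) | h
    · obtain ⟨n, _, hn⟩ := mem_image_ev.1 h
      exact ⟨n, hn⟩
    · simp at h
    · obtain ⟨n, hn⟩ := ih h
      by_cases hz : Sum.inl n ∈ X
      · exact ⟨n, by simpa [res, hz] using hn⟩
      · simp [res, hz] at hn

variable (M : FModel D)

theorem T_imp {w : M.W} {σ : Nat → Nat ⊕ D} {φ ψ : FmlB} :
    Truth M w (J σ (φ.imp ψ)) ↔ (Truth M w (J σ φ) → Truth M w (J σ ψ)) := by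
  simp only [J, Truth]

theorem T_bot {w : M.W} {σ : Nat → Nat ⊕ D} : ¬ Truth M w (J σ .bot) := by
  simp [J, Truth]

theorem T_all {w : M.W} {σ : Nat → Nat ⊕ D} (hσ : Closed σ) {x : Nat} {φ : FmlB} :
    Truth M w (J σ (.all x φ)) ↔
      ∀ a : D, Truth M w (J (Function.update σ x (Sum.inr a)) φ) := by
  simp only [J, Truth]
  apply forall_congr'
  intro a
  rw [J_substD x a φ (hσ.good.update x)]
  have : (fun n => if Function.update σ x (Sum.inl x) n = Sum.inl x then Sum.inr a
      else Function.update σ x (Sum.inl x) n) = Function.update σ x (Sum.inr a) := by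
    funext n
    by_cases hn : n = x
    · subst hn; simp
    · have : σ n ≠ Sum.inl x := fun e => hn (hσ.good _ _ e).symm
      simp [hn, this]
  rw [this]

theorem T_box {w : M.W} {σ : Nat → Nat ⊕ D} (hσ : Closed σ) {t : JTerm}
    {X : Finset (Nat ⊕ Empty)} {φ : FmlB} :
    Truth M w (J σ (.box t X φ)) ↔ w ∈ M.E t (J (res X σ) φ) ∧
      ∀ w', M.R w w' → ∀ τ : Nat → Nat ⊕ D, Closed τ →
        (∀ n, Sum.inl n ∈ X → τ n = σ n) → Truth M w' (J τ φ) := by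
  simp only [J, Truth]
  apply and_congr_right
  intro _
  apply forall_congr'
  intro w'
  apply forall_congr'
  intro _
  constructor
  · intro h τ hτ hX
    have := h τ hτ
    rw [J_instAll _ (hσ.good.res X)] at this
    have e : comp (res X σ) τ = τ := by
      funext n
      by_cases hn : Sum.inl n ∈ X
      · obtain ⟨a, ha⟩ := hσ n
        simp [comp, res, hn, ha, hX n hn]
      · simp [comp, res, hn]
    rwa [e] at this
  · intro h τ hτ
    rw [J_instAll _ (hσ.good.res X)]
    apply h
    · intro n
      by_cases hn : Sum.inl n ∈ X
      · obtain ⟨a, ha⟩ := hσ n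
        exact ⟨a, by simp [comp, res, hn, ha]⟩
      · obtain ⟨a, ha⟩ := hτ n
        exact ⟨a, by simp [comp, res, hn, ha]⟩
    · intro n hn
      obtain ⟨a, ha⟩ := hσ n
      simp [comp, res, hn, ha]

/-- Evidence for a partial instance is evidence for a further instance. -/
theorem res_insert_subst {σ : Nat → Nat ⊕ D} (hσ : Closed σ) {X : Finset (Nat ⊕ Empty)}
    {y : Nat} {a : D} (hy : Sum.inl y ∉ X) (φ : FmlB) :
    (J (res X σ) φ).subst (Sum.inl y) (Sum.inr a) =
      J (res (insert (Sum.inl y) X) (Function.update σ y (Sum.inr a))) φ := by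
  rw [J_substD _ _ _ (hσ.good.res X)]
  congr 1
  funext n
  by_cases hn : n = y
  · subst hn; simp [res, hy]
  · have : σ n ≠ Sum.inl y := fun e => hn (hσ.good _ _ e).symm
    by_cases hX : Sum.inl n ∈ X <;> simp [res, hn, this, hX]

theorem ax_sound (φ : FmlB) (h : IsAxiom Logic.folpb φ) :
    ∀ (w : M.W) (σ : Nat → Nat ⊕ D), Closed σ → Truth M w (J σ φ) := by
  intro w σ hσ
  cases h with
  | a1k _ φ ψ => simp only [T_imp]; tauto
  | a1s _ φ ψ χ => simp only [T_imp]; tauto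
  | a1dne _ φ => simp only [Fml.neg, T_imp, T_bot]; tauto
  | a1inst _ x e φ h =>
    rcases e with y | e
    · rw [T_imp, T_all M hσ, J_subst x y φ h]
      intro H
      obtain ⟨a, ha⟩ := hσ y
      rw [ha]
      exact H a
    · exact e.elim
  | a1allImp _ x φ ψ =>
    simp only [T_imp, T_all M hσ]
    exact fun h1 h2 a => h1 a (h2 a)
  | a1vac _ x φ h =>
    simp only [T_imp, T_all M hσ]
    intro H a
    rw [J_congr φ (τ := σ)]
    · exact H
    · intro n hn
      have : n ≠ x := by rintro rfl; exact h hn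
      simp [this]
  | a2 _ t X y φ h =>
    rcases y with y | e
    · simp only [T_imp, T_box M hσ]
      rintro ⟨h1, h2⟩
      constructor
      · rw [J_congr φ (τ := res (insert (Sum.inl y) X) σ)]
        · exact h1
        · intro n hn
          have : n ≠ y := by rintro rfl; exact h hn
          simp [res, this]
      · intro w' hw' τ hτ hX
        obtain ⟨a, ha⟩ := hσ y
        rw [J_congr φ (τ := Function.update τ y (Sum.inr a))]
        · apply h2 w' hw' _ (hτ.update y a)
          intro n hn
          by_cases hny : n = y
          · subst hny; simp [ha]
          · simp only [Function.update_of_ne hny]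
            apply hX
            simpa [hny] using hn
        · intro n hn
          have : n ≠ y := by rintro rfl; exact h hn
          simp [this]
    · exact e.elim
  | a3 _ t X y φ =>
    rcases y with y | e
    · by_cases hy : Sum.inl y ∈ X
      · rw [Finset.insert_eq_of_mem hy]; simp only [T_imp]; exact id
      · simp only [T_imp, T_box M hσ]
        rintro ⟨h1, h2⟩
        constructor
        · obtain ⟨a, ha⟩ := hσ y
          have := M.condInst t _ y a h1
          rw [res_insert_subst hσ hy, ← ha, Function.update_eq_self] at this
          exact this
        · intro w' hw' τ hτ hX
          exact h2 w' hw' τ hτ fun n hn => hX n (Finset.mem_insert_of_mem hn)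
    · exact e.elim
  | b1 _ t X φ =>
    simp only [T_imp, T_box M hσ]
    rintro ⟨_, h2⟩
    exact h2 w (M.refl w) σ hσ fun _ _ => rfl
  | b2 _ t s X φ ψ =>
    simp only [T_imp, T_box M hσ]
    rintro ⟨h1, h2⟩ ⟨h3, h4⟩
    refine ⟨M.condApp t s _ _ ⟨h1, h3⟩, ?_⟩
    intro w' hw' τ hτ hX
    exact h2 w' hw' τ hτ hX (h4 w' hw' τ hτ hX)
  | b3l _ t s X φ =>
    simp only [T_imp, T_box M hσ]
    rintro ⟨h1, h2⟩
    exact ⟨M.condPlus t s _ (Or.inl h1), h2⟩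
  | b3r _ t s X φ =>
    simp only [T_imp, T_box M hσ]
    rintro ⟨h1, h2⟩
    exact ⟨M.condPlus t s _ (Or.inr h1), h2⟩
  | b4 _ t X φ =>
    rw [T_imp, T_box M hσ, T_box M hσ]
    rintro ⟨h1, h2⟩
    constructor
    · simp only [J]
      have e : res X (res X σ) = res X σ := by
        funext n
        by_cases hn : Sum.inl n ∈ X <;> simp [res, hn]
      rw [e]
      apply M.condBang _ _ _ _ _ h1
      · intro v hv
        obtain ⟨n, hn, rfl⟩ := mem_image_ev.1 hv
        obtain ⟨a, ha⟩ := hσ n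
        simp [res, hn, ha]
      · intro v hv
        simp only [Fml.wvars, Finset.mem_filter] at hv
        obtain ⟨hv1, hv2⟩ := hv
        rcases v with m | a
        · simp at hv2
        · obtain ⟨n, hn⟩ := allVars_J φ hv1
          rw [mem_image_ev]
          refine ⟨n, ?_, hn⟩
          by_contra hX
          simp [res, hX] at hn
    · intro w' hw' τ hτ hX
      rw [T_box M hτ]
      constructor
      · have e : res X τ = res X σ := by
          funext n
          by_cases hn : Sum.inl n ∈ X
          · simp [res, hn, hX n hn]
          · simp [res, hn]
        rw [e]
        exact M.condClosure _ _ h1 hw'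
      · intro w'' hw'' τ' hτ' hX'
        exact h2 w'' (M.trans hw' hw'') τ' hτ' fun n hn => (hX' n hn).trans (hX n hn)
  | b5 _ t X x φ h =>
    rw [T_imp, T_box M hσ, T_box M hσ]
    rintro ⟨h1, h2⟩
    constructor
    · simp only [J]
      have e : Function.update (res X σ) x (Sum.inl x) = res X σ := by
        have : res X σ x = Sum.inl x := by simp [res, h]
        rw [← this, Function.update_eq_self]
      rw [e]
      exact M.condGen _ _ _ h1
    · intro w' hw' τ hτ hX
      rw [T_all M hτ]
      intro a
      apply h2 w' hw' _ (hτ.update x a)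
      intro n hn
      have : n ≠ x := by rintro rfl; exact h hn
      rw [Function.update_of_ne this, hX n hn]
  | bb t X y φ h =>
    rw [T_imp, T_all M hσ, T_box M hσ]
    intro H
    constructor
    · simp only [J]
      have e : Function.update (res X σ) y (Sum.inl y) = res X σ := by
        have : res X σ y = Sum.inl y := by simp [res, h]
        rw [← this, Function.update_eq_self]
      rw [e]
      apply M.condB
      intro a
      rw [res_insert_subst hσ h]
      exact ((T_box M (hσ.update y a)).1 (H a)).1
    · intro w' hw' τ hτ hX
      rw [T_all M hτ]
      intro a
      apply ((T_box M (hσ.update y a)).1 (H a)).2 w' hw' _ (hτ.update y a)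
      intro n hn
      by_cases hny : n = y
      · subst hny; simp
      · simp only [Function.update_of_ne hny]
        apply hX
        simpa [hny] using hn

theorem deriv_sound (CS : Set FmlB) (hCS : IsCS Logic.folpb CS) (hM : Meets M CS) (φ : FmlB)
    (h : Deriv Logic.folpb CS ∅ φ) :
    ∀ (w : M.W) (σ : Nat → Nat ⊕ D), Closed σ → Truth M w (J σ φ) := by
  induction h with
  | ax h => exact ax_sound M _ h
  | cs h =>
    intro w σ hσ
    obtain ⟨c, ψ, rfl, hψ⟩ := hCS _ h
    rw [T_box M hσ]
    constructor
    · have := hM c ψ h w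
      rw [toD_eq] at this
      have e : res ∅ σ = Sum.inl := by funext n; simp [res]
      rwa [e]
    · intro w' _ τ hτ _
      exact ax_sound M _ hψ w' τ hτ
  | hyp h => exact absurd h (Set.notMem_empty _)
  | mp _ _ h1 h2 =>
    intro w σ hσ
    exact (T_imp M).1 (h1 w σ hσ) (h2 w σ hσ)
  | genR _ _ ih =>
    intro w σ hσ
    rw [T_all M hσ]
    intro a
    exact ih w _ (hσ.update _ a)

theorem fv_foldr (φ : FmlB) (l : List Nat) (n : Nat) :
    Sum.inl n ∈ (l.foldr Fml.all φ).fv → Sum.inl n ∈ φ.fv ∧ n ∉ l := by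
  induction l with
  | nil => intro h; exact ⟨h, by simp⟩
  | cons x l ih =>
    intro h
    simp only [List.foldr_cons, Fml.fv, Finset.mem_sdiff, Finset.mem_singleton,
      Sum.inl.injEq] at h
    obtain ⟨h1, h2⟩ := ih h.1
    exact ⟨h1, by simp [h.2, h2]⟩

theorem close_sound (φ : FmlB) (w : M.W)
    (h : ∀ σ : Nat → Nat ⊕ D, Closed σ → Truth M w (J σ φ)) (l : List Nat) :
    ∀ σ : Nat → Nat ⊕ D, Closed σ → Truth M w (J σ (l.foldr Fml.all φ)) := by
  induction l with
  | nil => exact h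
  | cons x l ih =>
    intro σ hσ
    rw [List.foldr_cons, T_all M hσ]
    intro a
    exact ih _ (hσ.update x a)

end SoundAux

/-- **Soundness of FOLPb**: if `⊢_CS φ` then `φ` is valid in every Fitting model for
FOLPb meeting `CS`. -/
theorem soundness (CS : Set FmlB) (hCS : IsCS Logic.folpb CS) (φ : FmlB)
    (h : Deriv Logic.folpb CS ∅ φ) :
    ∀ (D : Type) [DecidableEq D] [Nonempty D] (M : FModel D),
      Meets M CS → Valid M φ := by
  intro D _ _ M hM w
  rw [SoundAux.toD_eq]
  obtain ⟨a⟩ := ‹Nonempty D›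
  have hσ : SoundAux.Closed (fun _ : Nat => (Sum.inr a : Nat ⊕ D)) := fun _ => ⟨a, rfl⟩
  have := SoundAux.close_sound M φ w (SoundAux.deriv_sound M CS hCS hM φ h w)
    φ.fbv.toList _ hσ
  rw [Fml.close, SoundAux.J_congr _ (τ := fun _ : Nat => (Sum.inr a : Nat ⊕ D))]
  · exact this
  · intro n hn
    obtain ⟨h1, h2⟩ := SoundAux.fv_foldr _ _ _ hn
    exfalso
    apply h2
    rw [Finset.mem_toList, Fml.fbv, Finset.mem_biUnion]
    exact ⟨_, h1, by simp⟩
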